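/- arXiv:2304.02932 — 5 statements merged into one kernel-verified Lean document; each statement's English description precedes it below -/
import Mathlib

section
/- Let X and Y be standard Borel spaces, let μ and ν be probability measures on X with μ absolutely continuous with respect to ν, and let κ and η be Markov kernels from X to Y such that κ(x) is absolutely continuous with respect to η(x) for every x ∈ X. Let α > 1 and ε₁, ε₂ ≥ 0 be reals such that D_α(μ‖ν) ≤ ε₁ and D_α(κ(x)‖η(x)) ≤ ε₂ for every x ∈ X. Then the composition-product measure μ ⊗ κ on X × Y is absolutely continuous with respect to ν ⊗ η and D_α(μ ⊗ κ ‖ ν ⊗ η) ≤ ε₁ + ε₂. (This is the measure-level form of the paper's lemma 'Adaptive Composition of RDP'.) -/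
open MeasureTheory ProbabilityTheory Real
open scoped ENNReal

/-- Rényi divergence of order `α`:
`D_α(μ‖ν) = (α−1)⁻¹ · log ∫ (dμ/dν)^α dν`. -/
noncomputable def renyiDiv {Ω : Type*} [MeasurableSpace Ω] (α : ℝ) (μ ν : Measure Ω) : ℝ :=
  (α - 1)⁻¹ * Real.log ((∫⁻ x, μ.rnDeriv ν x ^ α ∂ν).toReal)

/-- For `κ x ≪ η x`, the density of `μ ⊗ₘ κ` with respect to `ν ⊗ₘ η` is the product of the density
of `μ` and the kernel density of `κ`. -/
lemma rnDeriv_compProd_ae_eq_mul_kernel_rnDeriv {X Y : Type*}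
    [MeasurableSpace X] [MeasurableSpace Y] [MeasurableSpace.CountableOrCountablyGenerated X Y]
    {μ ν : Measure X} [IsFiniteMeasure μ] [IsFiniteMeasure ν]
    {κ η : Kernel X Y} [IsFiniteKernel κ] [IsFiniteKernel η]
    (hac : μ ≪ ν) (hacK : ∀ x, κ x ≪ η x) :
    (μ ⊗ₘ κ).rnDeriv (ν ⊗ₘ η) =ᵐ[ν ⊗ₘ η]
      fun p ↦ μ.rnDeriv ν p.1 * κ.rnDeriv η p.1 p.2 := by
  have hk : Measurable fun p : X × Y ↦ κ.rnDeriv η p.1 p.2 := κ.measurable_rnDeriv η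
  have hf : Measurable fun p : X × Y ↦ μ.rnDeriv ν p.1 * κ.rnDeriv η p.1 p.2 := by fun_prop
  suffices h : μ ⊗ₘ κ = (ν ⊗ₘ η).withDensity
      fun p ↦ μ.rnDeriv ν p.1 * κ.rnDeriv η p.1 p.2 by
    rw [h]
    exact Measure.rnDeriv_withDensity _ hf
  ext s hs
  rw [Measure.compProd_apply hs, withDensity_apply _ hs, ← lintegral_indicator hs,
    Measure.lintegral_compProd (hf.indicator hs),
    ← lintegral_rnDeriv_mul hac (Kernel.measurable_kernel_prodMk_left hs).aemeasurable]
  refine lintegral_congr fun x ↦ ?_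
  have hsx : MeasurableSet (Prod.mk x ⁻¹' s) := measurable_prodMk_left hs
  rw [← Kernel.setLIntegral_rnDeriv (hacK x) hsx, ← lintegral_indicator hsx,
    ← lintegral_const_mul _ ((κ.measurable_rnDeriv_right η x).indicator hsx)]
  refine lintegral_congr fun y ↦ ?_
  by_cases hy : (x, y) ∈ s <;> simp [hy]

/-- The moment of order `α` of the density of `μ ⊗ₘ κ` is the integral of the moment of `κ x`
against the power of the density of `μ`. -/
lemma lintegral_rnDeriv_compProd_rpow {X Y : Type*}
    [MeasurableSpace X] [MeasurableSpace Y] [MeasurableSpace.CountableOrCountablyGenerated X Y]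
    {μ ν : Measure X} [IsFiniteMeasure μ] [IsFiniteMeasure ν]
    {κ η : Kernel X Y} [IsFiniteKernel κ] [IsFiniteKernel η]
    (hac : μ ≪ ν) (hacK : ∀ x, κ x ≪ η x) {α : ℝ} (hα : 0 ≤ α) :
    ∫⁻ p, (μ ⊗ₘ κ).rnDeriv (ν ⊗ₘ η) p ^ α ∂(ν ⊗ₘ η) =
      ∫⁻ x, μ.rnDeriv ν x ^ α * ∫⁻ y, (κ x).rnDeriv (η x) y ^ α ∂(η x) ∂ν := by
  have hk : Measurable fun p : X × Y ↦ κ.rnDeriv η p.1 p.2 := κ.measurable_rnDeriv η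
  have h_eq : ∫⁻ p, (μ ⊗ₘ κ).rnDeriv (ν ⊗ₘ η) p ^ α ∂(ν ⊗ₘ η) =
      ∫⁻ p, (μ.rnDeriv ν p.1 * κ.rnDeriv η p.1 p.2) ^ α ∂(ν ⊗ₘ η) := by
    refine lintegral_congr_ae ?_
    filter_upwards [rnDeriv_compProd_ae_eq_mul_kernel_rnDeriv hac hacK] with p hp
    rw [hp]
  rw [h_eq, Measure.lintegral_compProd (by fun_prop)]
  refine lintegral_congr fun x ↦ ?_
  simp_rw [ENNReal.mul_rpow_of_nonneg _ _ hα]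
  rw [lintegral_const_mul _ ((κ.measurable_rnDeriv_right η x).pow_const α)]
  congr 1
  refine lintegral_congr_ae ?_
  filter_upwards [κ.rnDeriv_eq_rnDeriv_measure (η := η) (a := x)] with y hy
  rw [hy]

lemma one_le_lintegral_rnDeriv_rpow {Ω : Type*} [MeasurableSpace Ω] {μ ν : Measure Ω}
    [IsProbabilityMeasure μ] [IsProbabilityMeasure ν] (hac : μ ≪ ν) {α : ℝ} (hα : 1 ≤ α) :
    1 ≤ ∫⁻ x, μ.rnDeriv ν x ^ α ∂ν := by
  have h := eLpNorm'_le_eLpNorm'_of_exponent_le one_pos hα ν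
    (μ.measurable_rnDeriv ν).aestronglyMeasurable
  simp only [eLpNorm', enorm_eq_self, ENNReal.rpow_one, div_one,
    Measure.lintegral_rnDeriv hac, measure_univ] at h
  by_contra! hlt
  exact h.not_gt (ENNReal.rpow_lt_one hlt (by positivity))

lemma lintegral_rnDeriv_rpow_le_of_renyiDiv_le {Ω : Type*} [MeasurableSpace Ω] {μ ν : Measure Ω}
    {α ε : ℝ} (hα : 1 < α) (hD : renyiDiv α μ ν ≤ ε) (hfin : ∫⁻ x, μ.rnDeriv ν x ^ α ∂ν ≠ ∞) :
    ∫⁻ x, μ.rnDeriv ν x ^ α ∂ν ≤ ENNReal.ofReal (Real.exp ((α - 1) * ε)) := by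
  rw [ENNReal.le_ofReal_iff_toReal_le hfin (Real.exp_pos _).le]
  rw [renyiDiv, inv_mul_le_iff₀ (sub_pos.2 hα)] at hD
  exact (Real.le_exp_log _).trans (Real.exp_le_exp.2 hD)

lemma renyiDiv_le_of_lintegral_rnDeriv_rpow_le {Ω : Type*} [MeasurableSpace Ω] {μ ν : Measure Ω}
    {α ε : ℝ} (hα : 1 < α) (hε : 0 ≤ ε)
    (h : ∫⁻ x, μ.rnDeriv ν x ^ α ∂ν ≤ ENNReal.ofReal (Real.exp ((α - 1) * ε))) :
    renyiDiv α μ ν ≤ ε := by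
  rw [renyiDiv, inv_mul_le_iff₀ (sub_pos.2 hα)]
  have hle := ENNReal.toReal_le_of_le_ofReal (Real.exp_pos _).le h
  rcases ENNReal.toReal_nonneg.eq_or_lt with h0 | hpos
  · rw [← h0, Real.log_zero]
    exact mul_nonneg (sub_pos.2 hα).le hε
  · exact (Real.log_le_iff_le_exp hpos).2 hle

/-- Adaptive composition of RDP (measure-level form): if `D_α(μ‖ν) ≤ ε₁` and
`D_α(κ(x)‖η(x)) ≤ ε₂` for every `x`, then the composition-product measures satisfy
`μ ⊗ κ ≪ ν ⊗ η` and `D_α(μ ⊗ κ ‖ ν ⊗ η) ≤ ε₁ + ε₂`. -/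
theorem rdp_adaptive_composition {X Y : Type*}
    [MeasurableSpace X] [StandardBorelSpace X]
    [MeasurableSpace Y] [StandardBorelSpace Y]
    (μ ν : Measure X) [IsProbabilityMeasure μ] [IsProbabilityMeasure ν]
    (κ η : Kernel X Y) [IsMarkovKernel κ] [IsMarkovKernel η]
    (hac : μ ≪ ν) (hacK : ∀ x, κ x ≪ η x)
    (α ε₁ ε₂ : ℝ) (hα : 1 < α) (hε₁ : 0 ≤ ε₁) (hε₂ : 0 ≤ ε₂)
    (hD₁ : renyiDiv α μ ν ≤ ε₁) (hD₂ : ∀ x, renyiDiv α (κ x) (η x) ≤ ε₂) :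
    (μ ⊗ₘ κ) ≪ (ν ⊗ₘ η) ∧ renyiDiv α (μ ⊗ₘ κ) (ν ⊗ₘ η) ≤ ε₁ + ε₂ := by
  refine ⟨hac.compProd (ae_of_all _ hacK), ?_⟩
  by_cases htop : ∫⁻ p, (μ ⊗ₘ κ).rnDeriv (ν ⊗ₘ η) p ^ α ∂(ν ⊗ₘ η) = ∞
  · -- An infinite moment makes `renyiDiv` vanish by the conventions for `toReal` and `log`.
    simp only [renyiDiv, htop, ENNReal.toReal_top, Real.log_zero, mul_zero]
    positivity
  have h_eq := lintegral_rnDeriv_compProd_rpow hac hacK (zero_le_one.trans hα.le)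
  have hμ_top : ∫⁻ x, μ.rnDeriv ν x ^ α ∂ν ≠ ∞ := by
    refine ne_top_of_le_ne_top htop ?_
    rw [h_eq]
    exact lintegral_mono fun x ↦
      le_mul_of_one_le_right' (one_le_lintegral_rnDeriv_rpow (hacK x) hα.le)
  refine renyiDiv_le_of_lintegral_rnDeriv_rpow_le hα (add_nonneg hε₁ hε₂) ?_
  have hbound : ∀ᵐ x ∂ν, μ.rnDeriv ν x ^ α * ∫⁻ y, (κ x).rnDeriv (η x) y ^ α ∂(η x) ≤
      μ.rnDeriv ν x ^ α * ENNReal.ofReal (Real.exp ((α - 1) * ε₂)) := by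
    have hmeas : Measurable fun x ↦ ∫⁻ y, (κ x).rnDeriv (η x) y ^ α ∂(η x) := by
      have hk : Measurable fun p : X × Y ↦ κ.rnDeriv η p.1 p.2 := κ.measurable_rnDeriv η
      convert (hk.pow_const α).lintegral_kernel_prod_right' (κ := η) using 2 with x
      refine lintegral_congr_ae ?_
      filter_upwards [κ.rnDeriv_eq_rnDeriv_measure (η := η) (a := x)] with y hy
      rw [hy]
    filter_upwards [ae_lt_top (((μ.measurable_rnDeriv ν).pow_const α).mul hmeas)
      (h_eq ▸ htop)] with x hx
    by_cases h0 : μ.rnDeriv ν x ^ α = 0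
    · simp [h0]
    · gcongr
      refine lintegral_rnDeriv_rpow_le_of_renyiDiv_le hα (hD₂ x) fun hinf ↦ ?_
      simp [hinf, ENNReal.mul_top h0] at hx
  calc ∫⁻ p, (μ ⊗ₘ κ).rnDeriv (ν ⊗ₘ η) p ^ α ∂(ν ⊗ₘ η)
      ≤ ∫⁻ x, μ.rnDeriv ν x ^ α * ENNReal.ofReal (Real.exp ((α - 1) * ε₂)) ∂ν :=
        h_eq.trans_le (lintegral_mono_ae hbound)
    _ = (∫⁻ x, μ.rnDeriv ν x ^ α ∂ν) * ENNReal.ofReal (Real.exp ((α - 1) * ε₂)) :=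
        lintegral_mul_const _ ((μ.measurable_rnDeriv ν).pow_const α)
    _ ≤ ENNReal.ofReal (Real.exp ((α - 1) * ε₁)) * ENNReal.ofReal (Real.exp ((α - 1) * ε₂)) := by
        gcongr
        exact lintegral_rnDeriv_rpow_le_of_renyiDiv_le hα hD₁ hμ_top
    _ = ENNReal.ofReal (Real.exp ((α - 1) * (ε₁ + ε₂))) := by
        rw [← ENNReal.ofReal_mul (Real.exp_pos _).le, ← Real.exp_add, mul_add]
end

section
/- Let μ₁, ν₁ be probability measures on a measurable space Ω₁ and μ₂, ν₂ probability measures on a measurable space Ω₂, let α > 1, ε₁, ε₂ ≥ 0, and δ₁, δ₂ ∈ (0,1). Suppose there are measurable events E₁ ⊆ Ω₁, E₂ ⊆ Ω₂, E₁' ⊆ Ω₁, E₂' ⊆ Ω₂ with μ₁(E₁) > 1−δ₁, ν₁(E₁') > 1−δ₁, μ₂(E₂) > 1−δ₂, ν₂(E₂') > 1−δ₂, such that the conditional measures satisfy μᵢ(·|Eᵢ) ≪ νᵢ(·|Eᵢ') and D_α(μᵢ(·|Eᵢ) ‖ νᵢ(·|Eᵢ')) ≤ εᵢ for i = 1, 2.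 Then there exist measurable events E ⊆ Ω₁ × Ω₂ and E' ⊆ Ω₁ × Ω₂ (namely E = E₁ × E₂ and E' = E₁' × E₂') with (μ₁ × μ₂)(E) > 1−(δ₁+δ₂), (ν₁ × ν₂)(E') > 1−(δ₁+δ₂), and D_α((μ₁ × μ₂)(·|E) ‖ (ν₁ × ν₂)(·|E')) ≤ ε₁ + ε₂. (This is the measure-level form of the paper's lemma 'Adaptive Composition of approximated RDP' for two mechanisms.) -/
open MeasureTheory ProbabilityTheory Real
open scoped ENNReal ProbabilityTheory

namespace MeasureTheory.Measure

variable {Ω₁ Ω₂ : Type*} [MeasurableSpace Ω₁] [MeasurableSpace Ω₂]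

/-- Conditioning a product measure on a rectangle is conditioning each factor. -/
lemma prod_cond_prod (μ₁ : Measure Ω₁) (μ₂ : Measure Ω₂) [IsFiniteMeasure μ₁]
    [IsFiniteMeasure μ₂] (s : Set Ω₁) (t : Set Ω₂) :
    (μ₁.prod μ₂)[|s ×ˢ t] = (μ₁[|s]).prod (μ₂[|t]) := by
  simp only [ProbabilityTheory.cond]
  rw [prod_smul_left, prod_smul_right, prod_restrict, prod_prod, smul_smul,
    ENNReal.mul_inv (Or.inr (measure_ne_top _ _)) (Or.inl (measure_ne_top _ _))]

/-- The density of a product of measures is the product of the densities. -/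
lemma rnDeriv_prod_of_ac {μ₁ ν₁ : Measure Ω₁} {μ₂ ν₂ : Measure Ω₂}
    [IsFiniteMeasure μ₁] [IsFiniteMeasure ν₁] [IsFiniteMeasure μ₂] [IsFiniteMeasure ν₂]
    (h₁ : μ₁ ≪ ν₁) (h₂ : μ₂ ≪ ν₂) :
    (μ₁.prod μ₂).rnDeriv (ν₁.prod ν₂) =ᵐ[ν₁.prod ν₂]
      fun z ↦ μ₁.rnDeriv ν₁ z.1 * μ₂.rnDeriv ν₂ z.2 := by
  have h : μ₁.prod μ₂ =
      (ν₁.prod ν₂).withDensity fun z ↦ μ₁.rnDeriv ν₁ z.1 * μ₂.rnDeriv ν₂ z.2 := by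
    rw [← prod_withDensity (measurable_rnDeriv _ _) (measurable_rnDeriv _ _),
      withDensity_rnDeriv_eq _ _ h₁, withDensity_rnDeriv_eq _ _ h₂]
  conv_lhs => rw [h]
  exact rnDeriv_withDensity _ (by fun_prop)

lemma lintegral_rnDeriv_prod_rpow {μ₁ ν₁ : Measure Ω₁} {μ₂ ν₂ : Measure Ω₂}
    [IsFiniteMeasure μ₁] [IsFiniteMeasure ν₁] [IsFiniteMeasure μ₂] [IsFiniteMeasure ν₂]
    (h₁ : μ₁ ≪ ν₁) (h₂ : μ₂ ≪ ν₂) {α : ℝ} (hα : 0 ≤ α) :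
    ∫⁻ z, (μ₁.prod μ₂).rnDeriv (ν₁.prod ν₂) z ^ α ∂(ν₁.prod ν₂) =
      (∫⁻ x, μ₁.rnDeriv ν₁ x ^ α ∂ν₁) * ∫⁻ y, μ₂.rnDeriv ν₂ y ^ α ∂ν₂ := by
  rw [← lintegral_prod_mul (by fun_prop) (by fun_prop)]
  refine lintegral_congr_ae ?_
  filter_upwards [rnDeriv_prod_of_ac h₁ h₂] with z hz
  rw [hz, ENNReal.mul_rpow_of_nonneg _ _ hα]

lemma ofReal_one_sub_add_lt_prod {μ₁ : Measure Ω₁} {μ₂ : Measure Ω₂} [SFinite μ₂]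
    {δ₁ δ₂ : ℝ} (hδ₁ : δ₁ ∈ Set.Ioo (0 : ℝ) 1) (hδ₂ : 0 < δ₂) {s : Set Ω₁} {t : Set Ω₂}
    (hs : ENNReal.ofReal (1 - δ₁) < μ₁ s) (ht : ENNReal.ofReal (1 - δ₂) < μ₂ t) :
    ENNReal.ofReal (1 - (δ₁ + δ₂)) < (μ₁.prod μ₂) (s ×ˢ t) := by
  rw [prod_prod]
  calc ENNReal.ofReal (1 - (δ₁ + δ₂)) ≤ ENNReal.ofReal ((1 - δ₁) * (1 - δ₂)) :=
        ENNReal.ofReal_le_ofReal (by nlinarith [mul_pos hδ₁.1 hδ₂])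
    _ = ENNReal.ofReal (1 - δ₁) * ENNReal.ofReal (1 - δ₂) :=
        ENNReal.ofReal_mul (by linarith [hδ₁.2])
    _ < μ₁ s * μ₂ t := ENNReal.mul_lt_mul hs ht

end MeasureTheory.Measure

/-- Since `Real.log 0 = 0`, the degenerate cases are covered by `0 ≤ ε₁` and `0 ≤ ε₂`. -/
lemma renyiDiv_prod_le {Ω₁ Ω₂ : Type*} [MeasurableSpace Ω₁] [MeasurableSpace Ω₂]
    {μ₁ ν₁ : Measure Ω₁} {μ₂ ν₂ : Measure Ω₂}
    [IsFiniteMeasure μ₁] [IsFiniteMeasure ν₁] [IsFiniteMeasure μ₂] [IsFiniteMeasure ν₂]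
    (h₁ : μ₁ ≪ ν₁) (h₂ : μ₂ ≪ ν₂) {α ε₁ ε₂ : ℝ} (hα : 0 ≤ α) (hε₁ : 0 ≤ ε₁) (hε₂ : 0 ≤ ε₂)
    (hD₁ : renyiDiv α μ₁ ν₁ ≤ ε₁) (hD₂ : renyiDiv α μ₂ ν₂ ≤ ε₂) :
    renyiDiv α (μ₁.prod μ₂) (ν₁.prod ν₂) ≤ ε₁ + ε₂ := by
  unfold renyiDiv at *
  rw [Measure.lintegral_rnDeriv_prod_rpow h₁ h₂ hα, ENNReal.toReal_mul]
  by_cases hI₁ : (∫⁻ x, μ₁.rnDeriv ν₁ x ^ α ∂ν₁).toReal = 0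
  · simpa [hI₁] using add_nonneg hε₁ hε₂
  by_cases hI₂ : (∫⁻ y, μ₂.rnDeriv ν₂ y ^ α ∂ν₂).toReal = 0
  · simpa [hI₂] using add_nonneg hε₁ hε₂
  rw [Real.log_mul hI₁ hI₂, mul_add]
  exact add_le_add hD₁ hD₂

/-- Adaptive composition of approximated RDP for two mechanisms (measure-level form):
the product events `E₁ × E₂` and `E₁' × E₂'` witness
`(δ₁+δ₂)`-approximate-`(α, ε₁+ε₂)`-RDP for the product measures. -/
theorem approx_rdp_composition_two {Ω₁ Ω₂ : Type*} [MeasurableSpace Ω₁] [MeasurableSpace Ω₂]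
    (μ₁ ν₁ : Measure Ω₁) (μ₂ ν₂ : Measure Ω₂)
    [IsProbabilityMeasure μ₁] [IsProbabilityMeasure ν₁]
    [IsProbabilityMeasure μ₂] [IsProbabilityMeasure ν₂]
    (α ε₁ ε₂ δ₁ δ₂ : ℝ) (hα : 1 < α) (hε₁ : 0 ≤ ε₁) (hε₂ : 0 ≤ ε₂)
    (hδ₁ : δ₁ ∈ Set.Ioo (0 : ℝ) 1) (hδ₂ : δ₂ ∈ Set.Ioo (0 : ℝ) 1)
    (E₁ E₁' : Set Ω₁) (E₂ E₂' : Set Ω₂)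
    (hE₁ : MeasurableSet E₁) (hE₁' : MeasurableSet E₁')
    (hE₂ : MeasurableSet E₂) (hE₂' : MeasurableSet E₂')
    (hμ₁ : ENNReal.ofReal (1 - δ₁) < μ₁ E₁) (hν₁ : ENNReal.ofReal (1 - δ₁) < ν₁ E₁')
    (hμ₂ : ENNReal.ofReal (1 - δ₂) < μ₂ E₂) (hν₂ : ENNReal.ofReal (1 - δ₂) < ν₂ E₂')
    (hac₁ : μ₁[|E₁] ≪ ν₁[|E₁']) (hac₂ : μ₂[|E₂] ≪ ν₂[|E₂'])
    (hD₁ : renyiDiv α (μ₁[|E₁]) (ν₁[|E₁']) ≤ ε₁)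
    (hD₂ : renyiDiv α (μ₂[|E₂]) (ν₂[|E₂']) ≤ ε₂) :
    ∃ E E' : Set (Ω₁ × Ω₂), E = E₁ ×ˢ E₂ ∧ E' = E₁' ×ˢ E₂' ∧
      MeasurableSet E ∧ MeasurableSet E' ∧
      ENNReal.ofReal (1 - (δ₁ + δ₂)) < (μ₁.prod μ₂) E ∧
      ENNReal.ofReal (1 - (δ₁ + δ₂)) < (ν₁.prod ν₂) E' ∧
      renyiDiv α ((μ₁.prod μ₂)[|E]) ((ν₁.prod ν₂)[|E']) ≤ ε₁ + ε₂ := by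
  refine ⟨E₁ ×ˢ E₂, E₁' ×ˢ E₂', rfl, rfl, hE₁.prod hE₂, hE₁'.prod hE₂',
    Measure.ofReal_one_sub_add_lt_prod hδ₁ hδ₂.1 hμ₁ hμ₂,
    Measure.ofReal_one_sub_add_lt_prod hδ₁ hδ₂.1 hν₁ hν₂, ?_⟩
  rw [Measure.prod_cond_prod, Measure.prod_cond_prod]
  exact renyiDiv_prod_le hac₁ hac₂ (by linarith) hε₁ hε₂ hD₁ hD₂
end

section
/- Let k be a positive natural number, v > 0, m, m' : Fin k → ℝ, and α > 1. Let μ be the product measure on ℝ^k whose i-th factor is gaussianReal (m i) v, and let ν be the product measure whose i-th factor is gaussianReal (m' i) v. Then μ is absolutely continuous with respect to ν and D_α(μ ‖ ν) = α · (∑_{i} (m i − m' i)²) / (2v). (This is the multivariate Gaussian mechanism fact underlying the private-gradient step of the paper's Algorithm: adding noise N(0, σ²C₁² I_{k×k}) to a vector of ℓ₂-sensitivity C₁ gives (α, α/(2σ²))-RDP.) -/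
open MeasureTheory ProbabilityTheory Real
open scoped ENNReal NNReal

/-- Tonelli's theorem for products of functions of one coordinate each. -/
lemma lintegral_pi_prod_eq_prod_lintegral {ι : Type*} [Fintype ι] {E : ι → Type*}
    [∀ i, MeasurableSpace (E i)] (μ : ∀ i, Measure (E i)) [∀ i, IsProbabilityMeasure (μ i)]
    {f : ∀ i, E i → ℝ≥0∞} (hf : ∀ i, Measurable (f i)) :
    ∫⁻ x, ∏ i, f i (x i) ∂(Measure.pi μ) = ∏ i, ∫⁻ x, f i x ∂(μ i) := by
  have hind : iIndepFun (fun i (x : ∀ i, E i) ↦ f i (x i)) (Measure.pi μ) :=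
    iIndepFun_pi fun i ↦ (hf i).aemeasurable
  have h := lintegral_prod_eq_prod_lintegral_of_indepFun Finset.univ
    (fun i (x : ∀ i, E i) ↦ f i (x i)) hind
    (fun i ↦ (hf i).comp (measurable_pi_apply i))
  rw [h]
  exact Finset.prod_congr rfl fun i _ ↦ (measurePreserving_eval μ i).lintegral_comp (hf i)

/-- A product of probability measures with densities has the product density. -/
lemma pi_withDensity {ι : Type*} [Fintype ι] {E : ι → Type*}
    [∀ i, MeasurableSpace (E i)] (μ : ∀ i, Measure (E i)) [∀ i, IsProbabilityMeasure (μ i)]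
    {f : ∀ i, E i → ℝ≥0∞} (hf : ∀ i, Measurable (f i))
    [∀ i, SigmaFinite ((μ i).withDensity (f i))] :
    Measure.pi (fun i ↦ (μ i).withDensity (f i))
      = (Measure.pi μ).withDensity fun x ↦ ∏ i, f i (x i) := by
  refine Measure.pi_eq fun s hs ↦ ?_
  rw [withDensity_apply _ (MeasurableSet.univ_pi hs),
    ← lintegral_indicator (MeasurableSet.univ_pi hs)]
  have hind : (Set.univ.pi s).indicator (fun x ↦ ∏ i, f i (x i))
      = fun x ↦ ∏ i, (s i).indicator (f i) (x i) := by
    ext x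
    by_cases hx : x ∈ Set.univ.pi s
    · rw [Set.indicator_of_mem hx]
      exact Finset.prod_congr rfl fun i _ ↦ (Set.indicator_of_mem (hx i trivial) _).symm
    · rw [Set.indicator_of_notMem hx]
      obtain ⟨i, hi⟩ : ∃ i, x i ∉ s i := by simpa using hx
      exact (Finset.prod_eq_zero (Finset.mem_univ i) (Set.indicator_of_notMem hi _)).symm
  rw [hind, lintegral_pi_prod_eq_prod_lintegral μ fun i ↦ (hf i).indicator (hs i)]
  exact Finset.prod_congr rfl fun i _ ↦ by
    rw [lintegral_indicator (hs i), withDensity_apply _ (hs i)]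

/-- The log-likelihood ratio of two real Gaussians with means `a`, `b` and common variance `v`. -/
noncomputable def gaussianLLR (a b : ℝ) (v : ℝ≥0) (x : ℝ) : ℝ :=
  (a - b) / v * x + (b ^ 2 - a ^ 2) / (2 * v)

lemma measurable_gaussianLLR (a b : ℝ) (v : ℝ≥0) : Measurable (gaussianLLR a b v) := by
  unfold gaussianLLR
  fun_prop

lemma gaussianReal_eq_withDensity_gaussianReal (a b : ℝ) {v : ℝ≥0} (hv : v ≠ 0) :
    gaussianReal a v
      = (gaussianReal b v).withDensity fun x ↦ ENNReal.ofReal (rexp (gaussianLLR a b v x)) := by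
  have hmeas : Measurable fun x ↦ ENNReal.ofReal (rexp (gaussianLLR a b v x)) :=
    (measurable_gaussianLLR a b v).exp.ennreal_ofReal
  rw [gaussianReal_of_var_ne_zero a hv, gaussianReal_of_var_ne_zero b hv,
    ← withDensity_mul _ (measurable_gaussianPDF b v) hmeas]
  congr 1
  ext x
  have hv' : (v : ℝ) ≠ 0 := NNReal.coe_ne_zero.mpr hv
  rw [Pi.mul_apply, gaussianPDF, gaussianPDF, ← ENNReal.ofReal_mul (gaussianPDFReal_nonneg b v x),
    gaussianPDFReal, gaussianPDFReal, mul_assoc (√(2 * π * v))⁻¹, ← Real.exp_add, gaussianLLR]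
  congr 3
  field_simp
  ring

/-- The `α`-th moment of the likelihood ratio of two real Gaussians with common variance. -/
lemma lintegral_exp_gaussianLLR_rpow (a b : ℝ) {v : ℝ≥0} (hv : v ≠ 0) (α : ℝ) :
    ∫⁻ x, ENNReal.ofReal (rexp (gaussianLLR a b v x)) ^ α ∂(gaussianReal b v)
      = ENNReal.ofReal (rexp (α * (α - 1) * (a - b) ^ 2 / (2 * v))) := by
  have hv' : (v : ℝ) ≠ 0 := NNReal.coe_ne_zero.mpr hv
  have hpow (x : ℝ) : ENNReal.ofReal (rexp (gaussianLLR a b v x)) ^ α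
      = ENNReal.ofReal (rexp (α * (b ^ 2 - a ^ 2) / (2 * v))
          * rexp (α * (a - b) / v * x)) := by
    rw [ENNReal.ofReal_rpow_of_pos (Real.exp_pos _), ← Real.exp_mul, ← Real.exp_add, gaussianLLR]
    congr 2
    ring
  simp_rw [hpow]
  rw [← ofReal_integral_eq_lintegral_ofReal
    ((integrable_exp_mul_gaussianReal _).const_mul _) (ae_of_all _ fun x ↦ by positivity),
    integral_const_mul]
  have hmgf := congrFun (mgf_id_gaussianReal (μ := b) (v := v)) (α * (a - b) / v)
  simp only [mgf, id] at hmgf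
  rw [hmgf, ← Real.exp_add]
  congr 2
  field_simp
  ring

/-- Rényi divergence between `k`-dimensional Gaussians with independent coordinates of
common variance `v`: `D_α(μ ‖ ν) = α · (∑ᵢ (mᵢ − m'ᵢ)²) / (2v)`. -/
theorem renyiDiv_gaussian_pi (k : ℕ) (hk : 0 < k) (v : ℝ≥0) (hv : 0 < v)
    (m m' : Fin k → ℝ) (α : ℝ) (hα : 1 < α) :
    (Measure.pi fun i => gaussianReal (m i) v) ≪ (Measure.pi fun i => gaussianReal (m' i) v) ∧
      renyiDiv α (Measure.pi fun i => gaussianReal (m i) v)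
          (Measure.pi fun i => gaussianReal (m' i) v)
        = α * (∑ i, (m i - m' i) ^ 2) / (2 * v) := by
  have hv0 : v ≠ 0 := hv.ne'
  have hmeas (i : Fin k) :
      Measurable fun x ↦ ENNReal.ofReal (rexp (gaussianLLR (m i) (m' i) v x)) :=
    (measurable_gaussianLLR _ _ v).exp.ennreal_ofReal
  have hsf (i : Fin k) : SigmaFinite ((gaussianReal (m' i) v).withDensity
      fun x ↦ ENNReal.ofReal (rexp (gaussianLLR (m i) (m' i) v x))) := by
    rw [← gaussianReal_eq_withDensity_gaussianReal _ _ hv0]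
    infer_instance
  have hμ : (Measure.pi fun i => gaussianReal (m i) v)
      = (Measure.pi fun i => gaussianReal (m' i) v).withDensity
          fun x ↦ ∏ i, ENNReal.ofReal (rexp (gaussianLLR (m i) (m' i) v (x i))) := by
    rw [← pi_withDensity _ hmeas]
    simp_rw [← gaussianReal_eq_withDensity_gaussianReal _ _ hv0]
  have hint : ∫⁻ x, (Measure.pi fun i => gaussianReal (m i) v).rnDeriv
        (Measure.pi fun i => gaussianReal (m' i) v) x ^ α
        ∂(Measure.pi fun i => gaussianReal (m' i) v)
      = ENNReal.ofReal (rexp (∑ i, α * (α - 1) * (m i - m' i) ^ 2 / (2 * v))) := by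
    have hprod : Measurable fun x : Fin k → ℝ ↦
        ∏ i, ENNReal.ofReal (rexp (gaussianLLR (m i) (m' i) v (x i))) :=
      Finset.measurable_fun_prod _ fun i _ ↦ (hmeas i).comp (measurable_pi_apply i)
    have hrn := Measure.rnDeriv_withDensity (Measure.pi fun i => gaussianReal (m' i) v) hprod
    rw [hμ, lintegral_congr_ae (hrn.mono fun x hx ↦ congrArg (· ^ α) hx)]
    simp_rw [← ENNReal.prod_rpow_of_nonneg (zero_le_one.trans hα.le)]
    rw [lintegral_pi_prod_eq_prod_lintegral _ fun i ↦ (hmeas i).pow_const α]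
    simp_rw [lintegral_exp_gaussianLLR_rpow _ _ hv0]
    rw [← ENNReal.ofReal_prod_of_nonneg fun i _ ↦ (Real.exp_pos _).le, ← Real.exp_sum]
  refine ⟨hμ ▸ withDensity_absolutelyContinuous _ _, ?_⟩
  have hα' : α - 1 ≠ 0 := (sub_pos.mpr hα).ne'
  rw [renyiDiv, hint, ENNReal.toReal_ofReal (Real.exp_pos _).le, Real.log_exp,
    ← Finset.sum_div, ← Finset.mul_sum]
  field_simp
end

section
/- Let P and Q be probability measures on a standard Borel space that are mutually absolutely continuous, let q ∈ (0,1), let α ≥ 2 be an integer, and let ε : ℕ → ℝ and ε∞ ∈ ℝ. Assume: (i) for every integer j with 2 ≤ j ≤ α, D_j(P‖Q) ≤ ε(j); (ii) dP/dQ ≤ exp(ε∞) and dQ/dP ≤ exp(ε∞) hold Q-almost everywhere and P-almost everywhere respectively. Let M = (1−q)·Q + q·P. Then (α−1)·D_α(M ‖ Q) ≤ log( 1 + q²·C(α,2)·min{ 4·(e^{ε(2)} − 1), e^{ε(2)}·min{2, (e^{ε∞} − 1)²} } + ∑_{j=3}^{α} q^j·C(α,j)·e^{(j−1)·ε(j)}·min{2,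 (e^{ε∞} − 1)^j} ), where C(α,j) denotes the binomial coefficient. (This subsampling amplification inequality is the mathematical core of the paper's Theorem 1: the private selection mechanism, whose unsubsampled privacy curve is ε(α) = α/(8σ_r²) + α/(2σ_p²), when run on a subsample with sampling ratio q satisfies δ_t-approximate-(α, ε_s(α))-RDP with ε_s(α) equal to (α−1)⁻¹ times the right-hand side above.) -/
open MeasureTheory ProbabilityTheory Real
open scoped ENNReal

/-- For natural orders, the Rényi divergence is expressed by a Bochner integral. -/
lemma renyiDiv_natCast {Ω : Type*} [MeasurableSpace Ω] (n : ℕ) (μ ν : Measure Ω)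
    [SigmaFinite μ] :
    renyiDiv (n : ℝ) μ ν
      = ((n : ℝ) - 1)⁻¹ * Real.log (∫ x, (μ.rnDeriv ν x).toReal ^ n ∂ν) := by
  have h : ∫ x, (μ.rnDeriv ν x ^ n).toReal ∂ν = (∫⁻ x, μ.rnDeriv ν x ^ n ∂ν).toReal := by
    refine integral_toReal ((Measure.measurable_rnDeriv μ ν).pow_const n).aemeasurable ?_
    filter_upwards [Measure.rnDeriv_lt_top μ ν] with x hx
    exact ENNReal.pow_lt_top hx
  simp only [renyiDiv, ENNReal.rpow_natCast, ← h, ENNReal.toReal_pow]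

/-- The density of a mixture `(1 - q) Q + q P` with respect to `Q`. -/
lemma toReal_rnDeriv_mixture {Ω : Type*} [MeasurableSpace Ω] (P Q : Measure Ω)
    [IsFiniteMeasure P] [IsFiniteMeasure Q] {q : ℝ} (hq : q ∈ Set.Icc (0 : ℝ) 1) :
    ∀ᵐ x ∂Q, ((ENNReal.ofReal (1 - q) • Q + ENNReal.ofReal q • P).rnDeriv Q x).toReal
      = 1 + q * ((P.rnDeriv Q x).toReal - 1) := by
  have := Q.smul_finite (ENNReal.ofReal_ne_top (r := 1 - q))
  have := P.smul_finite (ENNReal.ofReal_ne_top (r := q))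
  filter_upwards [Measure.rnDeriv_add (ENNReal.ofReal (1 - q) • Q) (ENNReal.ofReal q • P) Q,
    Measure.rnDeriv_smul_left_of_ne_top Q Q (ENNReal.ofReal_ne_top (r := 1 - q)),
    Measure.rnDeriv_smul_left_of_ne_top P Q (ENNReal.ofReal_ne_top (r := q)),
    Measure.rnDeriv_self Q, Measure.rnDeriv_lt_top P Q] with x h1 h2 h3 h4 h5
  rw [h1, Pi.add_apply, h2, h3, Pi.smul_apply, Pi.smul_apply, h4, smul_eq_mul, smul_eq_mul,
    mul_one, ENNReal.toReal_add ENNReal.ofReal_ne_top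
      (ENNReal.mul_ne_top ENNReal.ofReal_ne_top h5.ne),
    ENNReal.toReal_mul, ENNReal.toReal_ofReal (by linarith [hq.2]), ENNReal.toReal_ofReal hq.1]
  ring

/-- If `r` and `r⁻¹` are at most `c`, then `|r - 1| ≤ r (c - 1)`. -/
lemma abs_sub_one_le_mul_sub_one {r c : ℝ} (hr : 0 < r) (hrc : r ≤ c) (hrc' : r⁻¹ ≤ c) :
    |r - 1| ≤ r * (c - 1) := by
  have h : 1 ≤ r * c := by
    calc (1 : ℝ) = r * r⁻¹ := (mul_inv_cancel₀ hr.ne').symm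
      _ ≤ r * c := by gcongr
  rw [abs_le]
  refine ⟨by linarith, ?_⟩
  nlinarith [sq_nonneg (r - 1)]

/-- For `r ≥ 0`, the power `(r - 1) ^ n` is at most `r ^ n + 1`. -/
lemma sub_one_pow_le_pow_add_one {r : ℝ} (hr : 0 ≤ r) (n : ℕ) : (r - 1) ^ n ≤ r ^ n + 1 := by
  rcases le_total 1 r with h | h
  · have := pow_le_pow_left₀ (sub_nonneg.2 h) (by linarith : r - 1 ≤ r) n
    linarith
  · have h1 : |r - 1| ^ n ≤ 1 :=
      pow_le_one₀ (abs_nonneg _) (abs_le.2 ⟨by linarith, by linarith⟩)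
    rw [← abs_pow] at h1
    linarith [le_abs_self ((r - 1) ^ n), pow_nonneg hr n]

section BoundedDensity

variable {Ω : Type*} [MeasurableSpace Ω] {Q : Measure Ω} [IsProbabilityMeasure Q]
  {f : Ω → ℝ} {c : ℝ}

lemma integrable_pow_of_ae_abs_le (hf : AEStronglyMeasurable f Q) (hc : ∀ᵐ x ∂Q, |f x| ≤ c)
    (n : ℕ) : Integrable (fun x => f x ^ n) Q := by
  refine Integrable.of_bound (hf.pow n) (c ^ n) ?_
  filter_upwards [hc] with x hx
  rw [norm_pow]
  exact pow_le_pow_left₀ (norm_nonneg _) hx n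

/-- If `f` has mean one, then so does `1 + a (f - 1)`. -/
lemma integral_one_add_mul_sub_one (hf : Integrable f Q) (h1 : ∫ x, f x ∂Q = 1) (a : ℝ) :
    ∫ x, (1 + a * (f x - 1)) ∂Q = 1 := by
  have hi : Integrable (fun x => a * (f x - 1)) Q := (hf.sub (integrable_const 1)).const_mul a
  rw [integral_add (integrable_const _) hi, integral_const_mul,
    integral_sub hf (integrable_const _), h1]
  simp

/-- A nonnegative function of mean one has moments at least one. -/
lemma one_le_integral_pow (hf : Integrable f Q) (h0 : ∀ᵐ x ∂Q, 0 ≤ f x) (h1 : ∫ x, f x ∂Q = 1)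
    {n : ℕ} (hn : Integrable (fun x => f x ^ n) Q) : 1 ≤ ∫ x, f x ^ n ∂Q := by
  have hi : Integrable (fun x => (n : ℝ) * (f x - 1)) Q :=
    (hf.sub (integrable_const 1)).const_mul _
  calc (1 : ℝ) = ∫ x, (1 + (n : ℝ) * (f x - 1)) ∂Q :=
        (integral_one_add_mul_sub_one hf h1 n).symm
    _ ≤ ∫ x, f x ^ n ∂Q := by
        refine integral_mono_ae ((integrable_const _).add hi) hn ?_
        filter_upwards [h0] with x hx
        simpa using one_add_mul_le_pow (by linarith : -2 ≤ f x - 1) n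

/-- Binomial expansion of the moments of `1 + q (f - 1)` when `f` has mean one. -/
lemma integral_one_add_mul_sub_one_pow (hf : Integrable f Q) (h1 : ∫ x, f x ∂Q = 1)
    (hg : ∀ n : ℕ, Integrable (fun x => (f x - 1) ^ n) Q) (q : ℝ) {n : ℕ} (hn : 2 ≤ n) :
    ∫ x, (1 + q * (f x - 1)) ^ n ∂Q
      = 1 + q ^ 2 * (n.choose 2 : ℝ) * ∫ x, (f x - 1) ^ 2 ∂Q
        + ∑ j ∈ Finset.Icc 3 n, q ^ j * (n.choose j : ℝ) * ∫ x, (f x - 1) ^ j ∂Q := by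
  have hexp (x : Ω) : (1 + q * (f x - 1)) ^ n
      = ∑ j ∈ Finset.range (n + 1), q ^ j * (n.choose j : ℝ) * (f x - 1) ^ j := by
    rw [add_comm, add_pow]
    refine Finset.sum_congr rfl fun j _ => ?_
    rw [one_pow, mul_pow]
    ring
  simp_rw [hexp]
  rw [integral_finsetSum _ fun j _ => (hg j).const_mul _]
  simp_rw [integral_const_mul]
  have hsplit : Finset.Icc 3 n = Finset.Ico 3 (n + 1) := by ext; simp
  have hmean : ∫ x, (f x - 1) ∂Q = 0 := by
    rw [integral_sub hf (integrable_const _), h1]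
    simp
  rw [hsplit, ← Finset.sum_range_add_sum_Ico _ (by omega : 3 ≤ n + 1)]
  simp [Finset.sum_range_succ, hmean]

/-- Moments of `f - 1` are controlled by those of `f`, for a density `f` of mean one such that
`f` and `f⁻¹` are bounded by `c`. -/
lemma integral_sub_one_pow_le (hf : AEStronglyMeasurable f Q) (h0 : ∀ᵐ x ∂Q, 0 < f x)
    (h1 : ∫ x, f x ∂Q = 1) (hc : ∀ᵐ x ∂Q, f x ≤ c) (hc' : ∀ᵐ x ∂Q, (f x)⁻¹ ≤ c)
    (n : ℕ) :
    ∫ x, (f x - 1) ^ n ∂Q ≤ (∫ x, f x ^ n ∂Q) * min 2 ((c - 1) ^ n) := by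
  have habs : ∀ᵐ x ∂Q, |f x| ≤ c := by
    filter_upwards [h0, hc] with x hx hx'
    rwa [abs_of_pos hx]
  have hpow := integrable_pow_of_ae_abs_le hf habs
  have hint : Integrable f Q := by simpa using hpow 1
  have hsub : Integrable (fun x => (f x - 1) ^ n) Q := by
    refine integrable_pow_of_ae_abs_le (hf.sub aestronglyMeasurable_const) (c := c + 1) ?_ n
    filter_upwards [habs] with x hx
    exact (abs_sub _ _).trans (by simpa using hx)
  have hone := one_le_integral_pow hint (h0.mono fun _ h => h.le) h1 (hpow n)
  rw [mul_min_of_nonneg _ _ (by linarith)]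
  refine le_min ?_ ?_
  · calc ∫ x, (f x - 1) ^ n ∂Q ≤ ∫ x, (f x ^ n + 1) ∂Q := by
          refine integral_mono_ae hsub ((hpow n).add (integrable_const _)) ?_
          filter_upwards [h0] with x hx
          exact sub_one_pow_le_pow_add_one hx.le n
      _ = (∫ x, f x ^ n ∂Q) + 1 := by
          rw [integral_add (hpow n) (integrable_const _)]
          simp
      _ ≤ (∫ x, f x ^ n ∂Q) * 2 := by linarith
  · rw [← integral_mul_const]
    refine integral_mono_ae hsub ((hpow n).mul_const _) ?_
    filter_upwards [h0, hc, hc'] with x hx hxc hxc'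
    calc (f x - 1) ^ n ≤ |f x - 1| ^ n := by
          rw [← abs_pow]
          exact le_abs_self _
      _ ≤ (f x * (c - 1)) ^ n :=
          pow_le_pow_left₀ (abs_nonneg _) (abs_sub_one_le_mul_sub_one hx hxc hxc') n
      _ = f x ^ n * (c - 1) ^ n := mul_pow _ _ _

end BoundedDensity

/-- Subsampling amplification inequality (core of the paper's Theorem 1): for mutually
absolutely continuous `P, Q`, with `D_j(P‖Q) ≤ ε(j)` for `2 ≤ j ≤ α` and likelihood ratios
bounded by `exp(ε∞)`, the mixture `M = (1−q)Q + qP` satisfies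
`(α−1)·D_α(M‖Q) ≤ log(1 + q²·C(α,2)·min{4(e^{ε(2)}−1), e^{ε(2)}·min{2,(e^{ε∞}−1)²}}
  + ∑_{j=3}^{α} qʲ·C(α,j)·e^{(j−1)ε(j)}·min{2,(e^{ε∞}−1)ʲ})`. -/
theorem subsampling_amplification {Ω : Type*} [MeasurableSpace Ω] [StandardBorelSpace Ω]
    (P Q : Measure Ω) [IsProbabilityMeasure P] [IsProbabilityMeasure Q]
    (hPQ : P ≪ Q) (hQP : Q ≪ P)
    (q : ℝ) (hq : q ∈ Set.Ioo (0 : ℝ) 1)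
    (α : ℕ) (hα : 2 ≤ α) (ε : ℕ → ℝ) (εinf : ℝ)
    (hε : ∀ j : ℕ, 2 ≤ j → j ≤ α → renyiDiv (j : ℝ) P Q ≤ ε j)
    (hPQinf : ∀ᵐ x ∂Q, (P.rnDeriv Q x).toReal ≤ Real.exp εinf)
    (hQPinf : ∀ᵐ x ∂P, (Q.rnDeriv P x).toReal ≤ Real.exp εinf) :
    ((α : ℝ) - 1) *
        renyiDiv (α : ℝ) (ENNReal.ofReal (1 - q) • Q + ENNReal.ofReal q • P) Q
      ≤ Real.log (1
          + q ^ 2 * (α.choose 2 : ℝ) *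
            min (4 * (Real.exp (ε 2) - 1))
              (Real.exp (ε 2) * min 2 ((Real.exp εinf - 1) ^ 2))
          + ∑ j ∈ Finset.Icc 3 α, q ^ j * (α.choose j : ℝ) *
              Real.exp (((j : ℝ) - 1) * ε j) * min 2 ((Real.exp εinf - 1) ^ j)) := by
  set f : Ω → ℝ := fun x => (P.rnDeriv Q x).toReal with hfdef
  set c := Real.exp εinf
  have hf : AEStronglyMeasurable f Q :=
    (Measure.measurable_rnDeriv P Q).ennreal_toReal.aestronglyMeasurable
  have h0 : ∀ᵐ x ∂Q, 0 < f x := by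
    filter_upwards [hQP.ae_le (Measure.rnDeriv_pos hPQ), Measure.rnDeriv_lt_top P Q] with x hx hx'
    exact ENNReal.toReal_pos hx.ne' hx'.ne
  have h1 : ∫ x, f x ∂Q = 1 := by
    rw [hfdef, Measure.integral_toReal_rnDeriv hPQ]
    simp
  have hinv : ∀ᵐ x ∂Q, (f x)⁻¹ ≤ c := by
    filter_upwards [hQP.ae_le (Measure.inv_rnDeriv hPQ), hQP.ae_le hQPinf] with x hx hx'
    rwa [← hx, Pi.inv_apply, ENNReal.toReal_inv] at hx'
  have habs : ∀ᵐ x ∂Q, |f x| ≤ c := by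
    filter_upwards [h0, hPQinf] with x hx hx'
    rwa [abs_of_pos hx]
  have hpow := integrable_pow_of_ae_abs_le hf habs
  have hint : Integrable f Q := by simpa using hpow 1
  have hsub : ∀ n : ℕ, Integrable (fun x => (f x - 1) ^ n) Q := by
    refine integrable_pow_of_ae_abs_le (hf.sub aestronglyMeasurable_const) (c := c + 1) ?_
    filter_upwards [habs] with x hx
    exact (abs_sub _ _).trans (by simpa using hx)
  have hone (n : ℕ) : 1 ≤ ∫ x, f x ^ n ∂Q :=
    one_le_integral_pow hint (h0.mono fun _ h => h.le) h1 (hpow n)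
  have hc1 : 0 ≤ c - 1 := by
    have : ∫ x, f x ∂Q ≤ ∫ _, c ∂Q := integral_mono_ae hint (integrable_const _) hPQinf
    rw [h1] at this
    simpa using this
  have hmoment (j : ℕ) (hj : 2 ≤ j) (hjα : j ≤ α) :
      ∫ x, f x ^ j ∂Q ≤ Real.exp (((j : ℝ) - 1) * ε j) := by
    have hj' : (0 : ℝ) < (j : ℝ) - 1 := by
      have : (2 : ℝ) ≤ j := by exact_mod_cast hj
      linarith
    have h := hε j hj hjα
    rw [renyiDiv_natCast, inv_mul_le_iff₀ hj'] at h
    exact (Real.log_le_iff_le_exp (by linarith [hone j])).1 h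
  have hcentral (j : ℕ) (hj : 2 ≤ j) (hjα : j ≤ α) :
      ∫ x, (f x - 1) ^ j ∂Q ≤ Real.exp (((j : ℝ) - 1) * ε j) * min 2 ((c - 1) ^ j) :=
    (integral_sub_one_pow_le hf h0 h1 hPQinf hinv j).trans
      (mul_le_mul_of_nonneg_right (hmoment j hj hjα) (le_min zero_le_two (pow_nonneg hc1 j)))
  have hsecond : ∫ x, (f x - 1) ^ 2 ∂Q ≤ min (4 * (Real.exp (ε 2) - 1))
      (Real.exp (ε 2) * min 2 ((c - 1) ^ 2)) := by
    have hexp : Real.exp ((((2 : ℕ) : ℝ) - 1) * ε 2) = Real.exp (ε 2) := by norm_num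
    refine le_min ?_ (hexp ▸ hcentral 2 le_rfl hα)
    have hm := hmoment 2 le_rfl hα
    rw [hexp] at hm
    have hvar : ∫ x, (f x - 1) ^ 2 ∂Q = (∫ x, f x ^ 2 ∂Q) - 1 := by
      have hx (x : Ω) : (f x - 1) ^ 2 = f x ^ 2 - (2 * f x - 1) := by ring
      simp_rw [hx]
      have hlin : Integrable (fun x => 2 * f x - 1) Q :=
        (hint.const_mul 2).sub (integrable_const 1)
      rw [integral_sub (hpow 2) hlin, integral_sub (hint.const_mul 2) (integrable_const 1), integral_const_mul, h1]
      norm_num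
    linarith [hone 2]
  have := Q.smul_finite (ENNReal.ofReal_ne_top (r := 1 - q))
  have := P.smul_finite (ENNReal.ofReal_ne_top (r := q))
  have hα' : (α : ℝ) - 1 ≠ 0 := by
    have : (2 : ℝ) ≤ α := by exact_mod_cast hα
    linarith
  have hmix : ∫ x, ((ENNReal.ofReal (1 - q) • Q + ENNReal.ofReal q • P).rnDeriv Q x).toReal ^ α ∂Q
      = ∫ x, (1 + q * (f x - 1)) ^ α ∂Q := by
    refine integral_congr_ae ?_
    filter_upwards [toReal_rnDeriv_mixture P Q ⟨hq.1.le, hq.2.le⟩] with x hx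
    rw [hx]
  rw [renyiDiv_natCast, mul_inv_cancel_left₀ hα', hmix]
  have hpos : 0 < ∫ x, (1 + q * (f x - 1)) ^ α ∂Q := by
    have hg : Integrable (fun x => 1 + q * (f x - 1)) Q :=
      (integrable_const _).add ((hint.sub (integrable_const _)).const_mul q)
    refine zero_lt_one.trans_le (one_le_integral_pow hg ?_
      (integral_one_add_mul_sub_one hint h1 q) ?_)
    · filter_upwards [h0] with x hx
      nlinarith [hq.1, hq.2, mul_pos hq.1 hx]
    · refine integrable_pow_of_ae_abs_le hg.aestronglyMeasurable (c := 1 + |q| * (c + 1)) ?_ α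
      filter_upwards [habs] with x hx
      refine (abs_add_le _ _).trans ?_
      rw [abs_one, abs_mul]
      gcongr
      exact (abs_sub _ _).trans (by simpa using hx)
  refine Real.log_le_log hpos ?_
  rw [integral_one_add_mul_sub_one_pow hint h1 hsub q hα]
  have hq0 := hq.1.le
  refine add_le_add (by gcongr) (Finset.sum_le_sum fun j hj => ?_)
  rw [mul_assoc _ (Real.exp _)]
  rw [Finset.mem_Icc] at hj
  gcongr
  exact hcentral j (by omega) hj.2
end

section
/- Let T be a positive natural number and for each i ∈ Fin T let μᵢ and νᵢ be probability measures on a measurable space Ωᵢ. Let α > 1, and for each i let εᵢ ≥ 0 and δᵢ ∈ (0,1). Suppose for each i there are measurable events Eᵢ, Eᵢ' ⊆ Ωᵢ with μᵢ(Eᵢ) > 1−δᵢ, νᵢ(Eᵢ') > 1−δᵢ, μᵢ(·|Eᵢ) ≪ νᵢ(·|Eᵢ'), and D_α(μᵢ(·|Eᵢ) ‖ νᵢ(·|Eᵢ')) ≤ εᵢ. Let μ = ⨂ᵢ μᵢ and ν = ⨂ᵢ νᵢ be the product measures on ∏ᵢ Ωᵢ. Then there exist measurable events E, E' ⊆ ∏ᵢ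 Ωᵢ (namely the products ∏ᵢ Eᵢ and ∏ᵢ Eᵢ') with μ(E) > 1 − ∑ᵢ δᵢ, ν(E') > 1 − ∑ᵢ δᵢ, and D_α(μ(·|E) ‖ ν(·|E')) ≤ ∑ᵢ εᵢ. (This T-fold composition of approximate RDP is the measure-level content of the composition part of the paper's Theorem 2: the composition of T iterations, each δ_t-approximate-(α, εᵢ(α))-RDP, is T·δ_t-approximate-(α, ∑ᵢ εᵢ(α))-RDP.) -/
open MeasureTheory ProbabilityTheory Real
open scoped ENNReal ProbabilityTheory

namespace MeasureTheory.Measure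

variable {ι : Type*} [Fintype ι] {Ω : ι → Type*} [∀ i, MeasurableSpace (Ω i)]

/-- The Lebesgue integral of a product of functions of the separate coordinates against a product
of probability measures is the product of the integrals. -/
theorem lintegral_pi_prod (μ : ∀ i, Measure (Ω i)) [∀ i, IsProbabilityMeasure (μ i)]
    {f : ∀ i, Ω i → ℝ≥0∞} (hf : ∀ i, Measurable (f i)) :
    ∫⁻ x, ∏ i, f i (x i) ∂(Measure.pi μ) = ∏ i, ∫⁻ x, f i x ∂(μ i) := by
  have h := lintegral_prod_eq_prod_lintegral_of_indepFun Finset.univ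
    (fun i (x : ∀ i, Ω i) => f i (x i)) (iIndepFun_pi (μ := μ) fun i => (hf i).aemeasurable)
    (fun i => (hf i).comp (measurable_pi_apply i))
  rw [h]
  exact Finset.prod_congr rfl fun i _ =>
    (measurePreserving_eval μ i).lintegral_comp (hf i)

/-- A product of probability measures with densities has the product density. -/
theorem pi_withDensity (ν : ∀ i, Measure (Ω i)) [∀ i, IsProbabilityMeasure (ν i)]
    {f : ∀ i, Ω i → ℝ≥0∞} (hf : ∀ i, Measurable (f i))
    [∀ i, SigmaFinite ((ν i).withDensity (f i))] :
    Measure.pi (fun i => (ν i).withDensity (f i)) =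
      (Measure.pi ν).withDensity fun x => ∏ i, f i (x i) := by
  refine Measure.pi_eq fun s hs => ?_
  have hind : (Set.pi Set.univ s).indicator (fun x : ∀ i, Ω i => ∏ i, f i (x i)) =
      fun x => ∏ i, (s i).indicator (f i) (x i) := by
    classical
    ext x
    by_cases hx : x ∈ Set.pi Set.univ s
    · rw [Set.indicator_of_mem hx]
      exact Finset.prod_congr rfl fun i _ => (Set.indicator_of_mem (hx i trivial) _).symm
    · rw [Set.indicator_of_notMem hx]
      obtain ⟨i, hi⟩ : ∃ i, x i ∉ s i := by simpa using hx
      exact (Finset.prod_eq_zero (Finset.mem_univ i) (Set.indicator_of_notMem hi _)).symm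
  rw [withDensity_apply _ (MeasurableSet.univ_pi hs),
    ← lintegral_indicator (MeasurableSet.univ_pi hs), hind,
    lintegral_pi_prod ν fun i => (hf i).indicator (hs i)]
  exact Finset.prod_congr rfl fun i _ => by
    rw [lintegral_indicator (hs i), withDensity_apply _ (hs i)]

/-- The Radon–Nikodym derivative of a product of probability measures is the product of the
Radon–Nikodym derivatives. -/
theorem rnDeriv_pi {μ ν : ∀ i, Measure (Ω i)} [∀ i, IsProbabilityMeasure (μ i)]
    [∀ i, IsProbabilityMeasure (ν i)] (hac : ∀ i, μ i ≪ ν i) :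
    (Measure.pi μ).rnDeriv (Measure.pi ν) =ᵐ[Measure.pi ν]
      fun x => ∏ i, (μ i).rnDeriv (ν i) (x i) := by
  have hμ : Measure.pi μ =
      (Measure.pi ν).withDensity fun x => ∏ i, (μ i).rnDeriv (ν i) (x i) := by
    rw [← pi_withDensity ν fun i => measurable_rnDeriv (μ i) (ν i)]
    exact congrArg Measure.pi (funext fun i => (withDensity_rnDeriv_eq _ _ (hac i)).symm)
  rw [hμ]
  exact rnDeriv_withDensity _ (Finset.measurable_prod _ fun i _ =>
    (measurable_rnDeriv (μ i) (ν i)).comp (measurable_pi_apply i))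

/-- Conditioning a product of probability measures on a box is the product of the conditioned
measures. -/
theorem pi_cond (μ : ∀ i, Measure (Ω i)) [∀ i, IsProbabilityMeasure (μ i)]
    {E : ∀ i, Set (Ω i)} (hE : ∀ i, MeasurableSet (E i)) :
    (Measure.pi μ)[|Set.pi Set.univ E] = Measure.pi fun i => (μ i)[|E i] := by
  refine (Measure.pi_eq fun s _ => ?_).symm
  rw [cond_apply (MeasurableSet.univ_pi hE), ← Set.pi_inter_distrib, Measure.pi_pi,
    Measure.pi_pi, ENNReal.prod_inv_distrib, ← Finset.prod_mul_distrib]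
  · exact Finset.prod_congr rfl fun i _ => (cond_apply (hE i) _ _).symm
  · exact fun i _ j _ _ => Or.inr (measure_ne_top _ _)

end MeasureTheory.Measure

/-- The moments `∫ (dμ/dν)^α dν` are multiplicative over products of probability measures. -/
theorem lintegral_rnDeriv_rpow_pi {ι : Type*} [Fintype ι] {Ω : ι → Type*}
    [∀ i, MeasurableSpace (Ω i)] {μ ν : ∀ i, Measure (Ω i)} [∀ i, IsProbabilityMeasure (μ i)]
    [∀ i, IsProbabilityMeasure (ν i)] (hac : ∀ i, μ i ≪ ν i) {α : ℝ} (hα : 0 ≤ α) :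
    ∫⁻ x, (Measure.pi μ).rnDeriv (Measure.pi ν) x ^ α ∂(Measure.pi ν) =
      ∏ i, ∫⁻ x, (μ i).rnDeriv (ν i) x ^ α ∂(ν i) := by
  rw [← Measure.lintegral_pi_prod ν fun i => (Measure.measurable_rnDeriv (μ i) (ν i)).pow_const α]
  refine lintegral_congr_ae ?_
  filter_upwards [Measure.rnDeriv_pi hac] with x hx
  rw [hx, ENNReal.prod_rpow_of_nonneg hα]

/-- Rényi divergence is subadditive over products, up to a nonnegative bound on each factor. -/
theorem renyiDiv_pi_le {ι : Type*} [Fintype ι] {Ω : ι → Type*}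
    [∀ i, MeasurableSpace (Ω i)] {μ ν : ∀ i, Measure (Ω i)} [∀ i, IsProbabilityMeasure (μ i)]
    [∀ i, IsProbabilityMeasure (ν i)] (hac : ∀ i, μ i ≪ ν i) {α : ℝ} (hα : 0 ≤ α)
    {ε : ι → ℝ} (hε : ∀ i, 0 ≤ ε i) (hD : ∀ i, renyiDiv α (μ i) (ν i) ≤ ε i) :
    renyiDiv α (Measure.pi μ) (Measure.pi ν) ≤ ∑ i, ε i := by
  rw [renyiDiv, lintegral_rnDeriv_rpow_pi hac hα, ENNReal.toReal_prod]
  by_cases h : ∃ i, (∫⁻ x, (μ i).rnDeriv (ν i) x ^ α ∂(ν i)).toReal = 0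
  · obtain ⟨i, hi⟩ := h
    rw [Finset.prod_eq_zero (Finset.mem_univ i) hi, Real.log_zero, mul_zero]
    exact Finset.sum_nonneg fun i _ => hε i
  · push Not at h
    rw [Real.log_prod fun i _ => h i, Finset.mul_sum]
    exact Finset.sum_le_sum fun i _ => hD i

/-- Weierstrass product inequality for factors in `[0, 1]`. -/
theorem one_sub_sum_one_sub_le_prod {ι : Type*} (s : Finset ι) {a : ι → ℝ}
    (h0 : ∀ i, 0 ≤ a i) (h1 : ∀ i, a i ≤ 1) :
    1 - ∑ i ∈ s, (1 - a i) ≤ ∏ i ∈ s, a i := by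
  classical
  induction s using Finset.induction_on with
  | empty => simp
  | insert i s hi ih =>
    rw [Finset.sum_insert hi, Finset.prod_insert hi]
    have hp : ∏ j ∈ s, a j ≤ 1 := Finset.prod_le_one (fun j _ => h0 j) fun j _ => h1 j
    nlinarith [mul_nonneg (sub_nonneg.2 (h1 i)) (sub_nonneg.2 hp)]

/-- A union bound for boxes under a product of probability measures, in strict form. -/
theorem ofReal_one_sub_sum_lt_pi {ι : Type*} [Fintype ι] [Nonempty ι] {Ω : ι → Type*}
    [∀ i, MeasurableSpace (Ω i)] (μ : ∀ i, Measure (Ω i)) [∀ i, IsProbabilityMeasure (μ i)]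
    {δ : ι → ℝ} (hδ : ∀ i, δ i < 1) {E : ∀ i, Set (Ω i)}
    (hE : ∀ i, ENNReal.ofReal (1 - δ i) < μ i (E i)) :
    ENNReal.ofReal (1 - ∑ i, δ i) < Measure.pi μ (Set.pi Set.univ E) := by
  have hE' : ∀ i, 1 - δ i < (μ i).real (E i) := fun i =>
    (ENNReal.ofReal_lt_iff_lt_toReal (sub_nonneg.2 (hδ i).le) (measure_ne_top _ _)).1 (hE i)
  have hpos : ∀ i, 0 < (μ i).real (E i) := fun i => (sub_pos.2 (hδ i)).trans (hE' i)
  have hpi : Measure.pi μ (Set.pi Set.univ E) = ENNReal.ofReal (∏ i, (μ i).real (E i)) := by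
    rw [Measure.pi_pi, ENNReal.ofReal_prod_of_nonneg fun i _ => (hpos i).le]
    exact Finset.prod_congr rfl fun i _ => (ofReal_measureReal (measure_ne_top _ _)).symm
  rw [hpi, ENNReal.ofReal_lt_ofReal_iff (Finset.prod_pos fun i _ => hpos i)]
  have hlt : ∑ i, (1 - (μ i).real (E i)) < ∑ i, δ i :=
    Finset.sum_lt_sum_of_nonempty Finset.univ_nonempty fun i _ => by linarith [hE' i]
  have hle := one_sub_sum_one_sub_le_prod Finset.univ (fun i => (hpos i).le)
    fun i => measureReal_le_one (μ := μ i) (s := E i)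
  linarith

/-- `T`-fold composition of approximate RDP (measure-level form of the composition part of
the paper's Theorem 2): the product events `∏ᵢ Eᵢ` and `∏ᵢ Eᵢ'` witness
`(∑ᵢ δᵢ)`-approximate-`(α, ∑ᵢ εᵢ)`-RDP for the product measures. -/
theorem approx_rdp_composition (T : ℕ) (hT : 0 < T)
    {Ω : Fin T → Type*} [∀ i, MeasurableSpace (Ω i)]
    (μ ν : ∀ i, Measure (Ω i))
    [∀ i, IsProbabilityMeasure (μ i)] [∀ i, IsProbabilityMeasure (ν i)]
    (α : ℝ) (hα : 1 < α) (ε δ : Fin T → ℝ)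
    (hε : ∀ i, 0 ≤ ε i) (hδ : ∀ i, δ i ∈ Set.Ioo (0 : ℝ) 1)
    (E E' : ∀ i, Set (Ω i))
    (hE : ∀ i, MeasurableSet (E i)) (hE' : ∀ i, MeasurableSet (E' i))
    (hμE : ∀ i, ENNReal.ofReal (1 - δ i) < μ i (E i))
    (hνE' : ∀ i, ENNReal.ofReal (1 - δ i) < ν i (E' i))
    (hac : ∀ i, (μ i)[|E i] ≪ (ν i)[|E' i])
    (hD : ∀ i, renyiDiv α ((μ i)[|E i]) ((ν i)[|E' i]) ≤ ε i) :
    ∃ EE EE' : Set (∀ i, Ω i),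
      EE = Set.pi Set.univ E ∧ EE' = Set.pi Set.univ E' ∧
      MeasurableSet EE ∧ MeasurableSet EE' ∧
      ENNReal.ofReal (1 - ∑ i, δ i) < (Measure.pi μ) EE ∧
      ENNReal.ofReal (1 - ∑ i, δ i) < (Measure.pi ν) EE' ∧
      renyiDiv α ((Measure.pi μ)[|EE]) ((Measure.pi ν)[|EE']) ≤ ∑ i, ε i := by
  have : NeZero T := ⟨hT.ne'⟩
  have hμ : ∀ i, IsProbabilityMeasure ((μ i)[|E i]) := fun i =>
    cond_isProbabilityMeasure (ne_bot_of_gt (hμE i))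
  have hν : ∀ i, IsProbabilityMeasure ((ν i)[|E' i]) := fun i =>
    cond_isProbabilityMeasure (ne_bot_of_gt (hνE' i))
  refine ⟨_, _, rfl, rfl, MeasurableSet.univ_pi hE, MeasurableSet.univ_pi hE',
    ofReal_one_sub_sum_lt_pi μ (fun i => (hδ i).2) hμE,
    ofReal_one_sub_sum_lt_pi ν (fun i => (hδ i).2) hνE', ?_⟩
  rw [Measure.pi_cond μ hE, Measure.pi_cond ν hE']
  exact renyiDiv_pi_le hac (by linarith) hε hD
end
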